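/- arXiv:2205.15601 — 2 statements merged into one kernel-verified Lean document; each statement's English description precedes it below -/
import Mathlib

section
/- Let b ≥ 2 be an integer. Then the set consisting of the number 1 together with all the numbers γ_{i,j} := Σ_{p prime} 1/b^{i·p^j}, for integers i ≥ 1 and j ≥ 2 (the sum taken over all prime numbers p), is linearly independent over ℚ. -/
/-!
Clearing denominators, a rational relation becomes `∑ g x · v x = 0` with integers `g x`, where
`v x = ∑_{n ∈ D x} b⁻ⁿ` is the number whose base-`b` digits are carried by `D x`: `D x = {0}` for
the constant `1`, and `D x = {i·p^j : p prime}` for `γ_{i,j}`. Collecting terms gives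
`∑ c n / bⁿ = 0` with a bounded integer sequence `c`.

* Gap principle (`digit_eq_zero_of_isolated`): the scaled tails `R N = ∑ c (N+m) / b^m` are integers
  bounded by `2C`. If `c` vanishes on `K` consecutive places starting at `N`, then
  `R N = R (N+K) / b^K`, which forces `R N = 0` when `b^K > 2C`. So an `n` whose `K` neighbours
  on both sides have zero coefficient must itself have `c n = 0`.
* Isolation (`exists_isolating_class`): given `(i₀, j₀)`, there is a residue class coprime to its
  modulus such that for `p` in this class every `i₀ p^{j₀} + h` with `0 < |h| ≤ K` is divisible
  exactly once by some large prime `ℓ`. A number `i r^j` with `j ≥ 2` and `ℓ > i` is never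
  divisible exactly once by `ℓ`, so these neighbours lie in no `D x`.
* Dirichlet's theorem supplies arbitrarily large primes `p` in that class; for such `p` the
  number `i₀ p^{j₀}` is of the form `i r^j` only for `(i, j) = (i₀, j₀)`, so its coefficient is
  `g (i₀, j₀)`, which must therefore be zero.
-/

/-! ### Gap principle for expansions in base `b` -/

/-- Digits of an integer-coefficient expansion of `0` in base `b` that are isolated by `2C` zeros
on each side vanish, if `C` bounds the coefficients. -/
lemma digit_eq_zero_of_isolated (b : ℕ) (hb : 2 ≤ b) (c : ℕ → ℤ) (C : ℕ) (hC : ∀ n, |c n| ≤ C)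
    (h0 : ∑' n, (c n : ℝ) / (b : ℝ) ^ n = 0) (n : ℕ)
    (hleft : ∀ k < 2 * C, c (n + k + 1) = 0)
    (N : ℕ) (hN : n = N + 2 * C) (hright : ∀ k < 2 * C, c (N + k) = 0) : c n = 0 := by
  have hb2 : (2 : ℝ) ≤ b := by exact_mod_cast hb
  have hb0 : (0 : ℝ) < b := by linarith
  have hgeo : HasSum (fun m : ℕ => (C : ℝ) * (1 / 2) ^ m) (C * 2) :=
    hasSum_geometric_two.mul_left _
  have hterm : ∀ N m, ‖(c (N + m) : ℝ) / (b : ℝ) ^ m‖ ≤ (C : ℝ) * (1 / 2) ^ m := by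
    intro N m
    have h1 : |(c (N + m) : ℝ)| ≤ C := by exact_mod_cast hC (N + m)
    rw [norm_div, Real.norm_eq_abs, Real.norm_eq_abs, abs_of_pos (pow_pos hb0 m), one_div, inv_pow,
      ← div_eq_mul_inv]
    gcongr
  have hsum : ∀ N, Summable (fun m => (c (N + m) : ℝ) / (b : ℝ) ^ m) := fun N =>
    Summable.of_norm_bounded hgeo.summable (hterm N)
  set R : ℕ → ℝ := fun N => ∑' m, (c (N + m) : ℝ) / (b : ℝ) ^ m with hR
  have hbound : ∀ N, |R N| ≤ C * 2 := fun N => tsum_of_norm_bounded hgeo (hterm N)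
  have hrec : ∀ N, R N = c N + R (N + 1) / b := by
    intro N
    simp only [hR]
    rw [(hsum N).tsum_eq_zero_add, ← tsum_div_const]
    congr 1
    · simp
    · refine tsum_congr fun m => ?_
      rw [show N + (m + 1) = N + 1 + m by ring, pow_succ, div_div]
  have hRint : ∀ N, ∃ z : ℤ, R N = z := by
    intro N
    induction N with
    | zero => exact ⟨0, by simpa [hR] using h0⟩
    | succ N ih =>
      obtain ⟨z, hz⟩ := ih
      refine ⟨b * (z - c N), ?_⟩
      have := hrec N
      rw [hz] at this
      push_cast
      field_simp at this
      linarith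
  have hshift : ∀ N K, (∀ k < K, c (N + k) = 0) → R N * (b : ℝ) ^ K = R (N + K) := by
    intro N K
    induction K with
    | zero => simp
    | succ K ih =>
      intro h
      have h1 := ih fun k hk => h k (by omega)
      have h2 := hrec (N + K)
      rw [h K (by omega)] at h2
      rw [pow_succ, ← mul_assoc, h1, h2, ← add_assoc]
      field_simp
      simp
  have hzero : ∀ N, (∀ k < 2 * C, c (N + k) = 0) → R N = 0 := by
    intro N h
    obtain ⟨z, hz⟩ := hRint N
    have h1 := hshift N _ h
    have h2 := hbound (N + 2 * C)
    rw [← h1, abs_mul, abs_of_pos (pow_pos hb0 _)] at h2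
    have h3 : ((2 * C : ℕ) : ℝ) < (b : ℝ) ^ (2 * C) := by
      exact_mod_cast Nat.lt_pow_self (by omega)
    push_cast at h3
    have h4 : |R N| < 1 := by
      by_contra! h5
      nlinarith [pow_pos hb0 (2 * C)]
    rw [hz] at h4 ⊢
    have h5 : |z| < 1 := by exact_mod_cast h4
    rw [Int.abs_lt_one_iff.mp h5]
    simp
  have e1 : R n = 0 := by
    rw [hN, ← hshift N _ hright, hzero N hright, zero_mul]
  have e2 : R (n + 1) = 0 := hzero (n + 1) fun k hk => by
    rw [show n + 1 + k = n + k + 1 by ring]; exact hleft k hk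
  have := hrec n
  rw [e1, e2] at this
  simpa using this.symm

/-! ### Isolating a value `i p^j` by congruences -/

/-- The number `i x^j + h` can be made divisible exactly once by a prime `ℓ` as large as desired,
with `x` prime to `ℓ`. -/
lemma exists_prime_exactly_dvd (i j : ℕ) (hi : 1 ≤ i) (hj : 2 ≤ j) (h : ℤ) (hh : h ≠ 0) (M : ℕ) :
    ∃ l : ℕ, l.Prime ∧ M < l ∧ ∃ x : ℤ, IsCoprime x (l : ℤ) ∧
      (l : ℤ) ∣ i * x ^ j + h ∧ ¬ (l : ℤ) ^ 2 ∣ i * x ^ j + h := by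
  -- With `x = h y` we have `i x^j + h = h (i h^(j-1) y^j + 1)`; taking `y` a factorial, the
  -- second factor has only large prime factors.
  set M' : ℕ := M + i + j + h.natAbs + 2 with hM'
  set y : ℤ := ((M'.factorial : ℕ) : ℤ) with hy
  obtain ⟨k, rfl⟩ : ∃ k, j = k + 1 := ⟨j - 1, by omega⟩
  set w : ℤ := i * h ^ k * y ^ (k + 1) with hw
  have hy2 : 2 ≤ y := by
    have : 2 ≤ M'.factorial := le_trans (by omega) (Nat.self_le_factorial M')
    rw [hy]; exact_mod_cast this
  have hwabs : (4 : ℤ) ≤ |w| := by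
    rw [hw, abs_mul, abs_mul, abs_pow, abs_pow, abs_of_nonneg (by positivity : (0 : ℤ) ≤ i),
      abs_of_pos (by linarith : 0 < y)]
    have h1 : (1 : ℤ) ≤ i := by exact_mod_cast hi
    have h2 : (1 : ℤ) ≤ |h| ^ k := one_le_pow₀ (Int.one_le_abs hh)
    have h3 : (4 : ℤ) ≤ y ^ (k + 1) := by
      calc (4 : ℤ) = 2 ^ 2 := by norm_num
        _ ≤ 2 ^ (k + 1) := pow_le_pow_right₀ (by norm_num) hj
        _ ≤ y ^ (k + 1) := by gcongr
    nlinarith [mul_le_mul h1 h2 (by norm_num) (by linarith)]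
  have hne : (w + 1).natAbs ≠ 1 := by
    intro h1
    rcases abs_cases w with ⟨h2, _⟩ | ⟨h2, _⟩ <;> omega
  obtain ⟨l, hl, hlw⟩ := Nat.exists_prime_and_dvd hne
  have hlw : (l : ℤ) ∣ w + 1 := Int.natCast_dvd.mpr hlw
  have hlp : Prime (l : ℤ) := Nat.prime_iff_prime_int.mp hl
  have hly : ¬ (l : ℤ) ∣ y := by
    intro h1
    have h2 : (l : ℤ) ∣ w := by
      rw [hw]; exact Dvd.dvd.mul_left (dvd_pow h1 (by omega)) _
    exact hlp.not_dvd_one ((dvd_add_right h2).mp hlw)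
  have hlM : M' < l := by
    by_contra! h1
    exact hly (by rw [hy]; exact_mod_cast (Nat.dvd_factorial hl.pos h1))
  have hsmall : ∀ a : ℕ, 0 < a → a ≤ M' → ¬ (l : ℤ) ∣ a := by
    intro a ha ha' h1
    have := Nat.le_of_dvd ha (by exact_mod_cast h1)
    omega
  have hli := hsmall i (by omega) (by omega)
  have hlj := hsmall (k + 1) (by omega) (by omega)
  have hlh : ¬ (l : ℤ) ∣ h := by
    intro h1
    exact hsmall h.natAbs (by omega) (by omega) (by simpa using h1)
  set x : ℤ := h * y with hx
  have hlx : ¬ (l : ℤ) ∣ x := by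
    rw [hx, hlp.dvd_mul]; tauto
  have hdvd : (l : ℤ) ∣ i * x ^ (k + 1) + h := by
    have : (i : ℤ) * x ^ (k + 1) + h = h * (w + 1) := by rw [hx, hw]; ring
    rw [this]; exact Dvd.dvd.mul_left hlw _
  have hcop : ∀ z : ℤ, ¬ (l : ℤ) ∣ z → IsCoprime z (l : ℤ) := fun z hz =>
    ((Prime.coprime_iff_not_dvd hlp).mpr hz).symm
  refine ⟨l, hl, by omega, ?_⟩
  by_cases hsq : (l : ℤ) ^ 2 ∣ i * x ^ (k + 1) + h
  · -- Replacing `x` by `x + ℓ` changes the value by `i (k+1) x^k ℓ` modulo `ℓ²`.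
    have hlx' : ¬ (l : ℤ) ∣ x + l := by
      intro h1; exact hlx ((dvd_add_left (dvd_refl _)).mp h1)
    obtain ⟨t, ht⟩ := Polynomial.powAddExpansion x (l : ℤ) (k + 1)
    have hexp : (i : ℤ) * (x + l) ^ (k + 1) + h
        = (i * x ^ (k + 1) + h) + l * (i * ((k + 1 : ℕ) * x ^ k)) + l ^ 2 * (i * t) := by
      rw [ht]; simp only [Nat.add_sub_cancel]; push_cast; ring
    refine ⟨x + l, hcop _ hlx', ?_, ?_⟩
    · rw [hexp]
      refine dvd_add (dvd_add hdvd (dvd_mul_right _ _)) ?_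
      exact Dvd.dvd.mul_right (dvd_pow_self _ (by norm_num)) _
    · rw [hexp, dvd_add_left (dvd_mul_right _ _), dvd_add_right hsq, pow_two]
      rw [mul_dvd_mul_iff_left hlp.ne_zero, hlp.dvd_mul, hlp.dvd_mul]
      rintro (h1 | h1 | h1)
      · exact hli h1
      · exact hlj h1
      · exact hlx (hlp.dvd_of_dvd_pow h1)
  · exact ⟨x, hcop _ hlx, hdvd, hsq⟩

/-- The exact divisibility by primes `ℓ > B` can be imposed for all shifts `h` of a finite set
at once, by the Chinese remainder theorem. -/
lemma exists_isolating_class (i j : ℕ) (hi : 1 ≤ i) (hj : 2 ≤ j) (B : ℕ) (H : Finset ℤ)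
    (hH : ∀ h ∈ H, h ≠ 0) :
    ∃ Q : ℕ, 0 < Q ∧ ∃ a : ℤ, IsCoprime a (Q : ℤ) ∧ ∀ x : ℤ, x ≡ a [ZMOD Q] → ∀ h ∈ H,
      ∃ l : ℕ, l.Prime ∧ B < l ∧ (l : ℤ) ∣ i * x ^ j + h ∧ ¬ (l : ℤ) ^ 2 ∣ i * x ^ j + h := by
  induction H using Finset.induction_on with
  | empty => exact ⟨1, one_pos, 1, isCoprime_one_left, by simp⟩
  | insert h H _ ih =>
    obtain ⟨Q, hQ, a, haQ, hax⟩ := ih fun h' hh' => hH h' (Finset.mem_insert_of_mem hh')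
    obtain ⟨l, hl, hlM, x, hxl, hd, hnd⟩ :=
      exists_prime_exactly_dvd i j hi hj h (hH h (Finset.mem_insert_self _ _)) (B + Q)
    have hcop : Nat.Coprime Q (l ^ 2) := by
      refine Nat.Coprime.pow_right 2 (Nat.Coprime.symm ((Nat.Prime.coprime_iff_not_dvd hl).mpr ?_))
      intro h1
      have := Nat.le_of_dvd hQ h1
      omega
    obtain ⟨u, v, huv⟩ := Nat.isCoprime_iff_coprime.mpr hcop
    push_cast at huv
    set a' : ℤ := a * (v * l ^ 2) + x * (u * Q) with ha'
    have h1 : a' ≡ a [ZMOD Q] := by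
      refine (Int.modEq_iff_dvd.mpr ⟨u * (a - x), ?_⟩)
      rw [ha']; linear_combination -a * huv
    have h2 : a' ≡ x [ZMOD (l ^ 2 : ℤ)] := by
      refine (Int.modEq_iff_dvd.mpr ⟨v * (x - a), ?_⟩)
      rw [ha']; linear_combination -x * huv
    refine ⟨Q * l ^ 2, Nat.mul_pos hQ (pow_pos hl.pos 2), a', ?_, ?_⟩
    · push_cast
      refine IsCoprime.mul_right ?_ ?_
      · obtain ⟨t, ht⟩ := h1.dvd
        rw [show a' = a + Q * (-t) by linarith]
        exact IsCoprime.add_mul_left_left haQ _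
      · obtain ⟨t, ht⟩ := h2.dvd
        rw [show a' = x + l ^ 2 * (-t) by linarith]
        exact IsCoprime.add_mul_left_left hxl.pow_right _
    · intro z hz h' hh'
      push_cast at hz
      rcases Finset.mem_insert.mp hh' with rfl | hh'
      · have hzx : z ≡ x [ZMOD (l ^ 2 : ℤ)] := (hz.of_mul_left _).trans h2
        have hval : (i : ℤ) * z ^ j + h' ≡ i * x ^ j + h' [ZMOD (l ^ 2 : ℤ)] :=
          ((hzx.pow j).mul_left _).add_right _
        have hval' : (i : ℤ) * z ^ j + h' ≡ i * x ^ j + h' [ZMOD (l : ℤ)] := by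
          rw [pow_two] at hval; exact hval.of_mul_left _
        exact ⟨l, hl, by omega, hval'.dvd_iff.mpr hd,
          fun hc => hnd (hval.dvd_iff.mp hc)⟩
      · exact hax z ((hz.of_mul_right _).trans h1) h' hh'

/-! ### The series as expansions in base `b` -/

/-- The places `n` at which the term `b⁻ⁿ` occurs in the series for an index: `{0}` for the number
`1`, and the numbers `i p^j` with `p` prime for `γ_{i,j}`. -/
def digitSet : Option {p : ℕ × ℕ // 1 ≤ p.1 ∧ 2 ≤ p.2} → Set ℕ
  | none => {0}
  | some q => Set.range fun p : {p : ℕ // p.Prime} => q.1.1 * (p : ℕ) ^ q.1.2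

open Classical in
lemma hasSum_digitSet (b : ℕ) (hb : 2 ≤ b) (x : Option {p : ℕ × ℕ // 1 ≤ p.1 ∧ 2 ≤ p.2}) :
    HasSum (fun n => (if n ∈ digitSet x then (1 : ℝ) else 0) / (b : ℝ) ^ n)
      (x.elim (1 : ℝ) fun q =>
        ∑' p : {p : ℕ // p.Prime}, 1 / (b : ℝ) ^ (q.1.1 * (p : ℕ) ^ q.1.2)) := by
  have hb2 : (2 : ℝ) ≤ b := by exact_mod_cast hb
  cases x with
  | none =>
    convert hasSum_single (f := fun n => (if n ∈ digitSet none then (1 : ℝ) else 0) / (b : ℝ) ^ n)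
      0 ?_ using 1
    · simp [digitSet]
    · intro n hn
      simp [digitSet, hn]
  | some q =>
    obtain ⟨⟨i, j⟩, hi, hj⟩ := q
    simp only [Option.elim]
    change 1 ≤ i at hi
    change 2 ≤ j at hj
    have hinj : Function.Injective fun p : {p : ℕ // p.Prime} => i * (p : ℕ) ^ j := by
      intro p r hpr
      have h1 := Nat.eq_of_mul_eq_mul_left (by omega) hpr
      exact Subtype.ext (Nat.pow_left_injective (by omega) h1)
    have hgeo : Summable fun n : ℕ => 1 / (b : ℝ) ^ n := by
      simpa using summable_geometric_of_lt_one (r := (b : ℝ)⁻¹) (by positivity)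
        (inv_lt_one_of_one_lt₀ (by linarith))
    have hs := (hgeo.comp_injective hinj).hasSum
    rw [← hinj.hasSum_iff]
    · have hm : ∀ p : {p : ℕ // p.Prime}, i * (p : ℕ) ^ j ∈ digitSet (some ⟨(i, j), hi, hj⟩) :=
        fun p => ⟨p, rfl⟩
      refine (congrArg (fun f => HasSum f _) (funext fun p => ?_)).mpr hs
      simp only [Function.comp_apply]
      rw [if_pos (hm p)]
    · intro n hn
      have : n ∉ digitSet (some ⟨(i, j), hi, hj⟩) := hn
      rw [if_neg this, zero_div]

/-- If `p` is a prime exceeding both coefficients, the representation `i₀ p^{j₀}` determines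
the coefficient and the exponent. -/
lemma eq_of_mul_pow_eq {i j i₀ j₀ p r : ℕ} (hp : p.Prime) (hr : r.Prime) (hi : 1 ≤ i)
    (hi₀ : 1 ≤ i₀) (hj₀ : 1 ≤ j₀) (hip : i < p) (hip₀ : i₀ < p)
    (h : i * r ^ j = i₀ * p ^ j₀) : i = i₀ ∧ j = j₀ := by
  have h1 : ¬ p ∣ i := fun hd => by have := Nat.le_of_dvd hi hd; omega
  have h2 : ¬ p ∣ i₀ := fun hd => by have := Nat.le_of_dvd hi₀ hd; omega
  have h3 : p ∣ i * r ^ j := h ▸ Dvd.dvd.mul_left (dvd_pow_self p (by omega)) _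
  have h4 : p = r :=
    (Nat.prime_dvd_prime_iff_eq hp hr).mp
      (hp.dvd_of_dvd_pow ((hp.dvd_mul.mp h3).resolve_left h1))
  subst h4
  have h5 : j = j₀ := by
    have := congrArg (fun n => n.factorization p) h
    rw [Nat.factorization_mul (by omega) (pow_ne_zero _ hp.ne_zero),
      Nat.factorization_mul (by omega) (pow_ne_zero _ hp.ne_zero)] at this
    simpa [Nat.factorization_eq_zero_of_not_dvd h1, Nat.factorization_eq_zero_of_not_dvd h2,
      hp.factorization_self] using this
  subst h5
  exact ⟨Nat.eq_of_mul_eq_mul_right (pow_pos hp.pos _) h, rfl⟩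

/-! ### Linear independence -/

/-- **Corollary 3 (first part).** Let `b ≥ 2` be an integer. Then the set consisting of the
number `1` together with all the numbers `γ_{i,j} = ∑_{p prime} 1/b^(i·p^j)` for integers
`i ≥ 1`, `j ≥ 2`, is linearly independent over `ℚ`. -/
theorem corollary3_primes (b : ℕ) (hb : 2 ≤ b) :
    LinearIndependent ℚ (fun x : Option {p : ℕ × ℕ // 1 ≤ p.1 ∧ 2 ≤ p.2} =>
      x.elim (1 : ℝ) fun q =>
        ∑' p : {p : ℕ // p.Prime}, 1 / (b : ℝ) ^ (q.1.1 * (p : ℕ) ^ q.1.2)) := by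
  classical
  rw [← LinearIndependent.iff_fractionRing ℤ ℚ, linearIndependent_iff']
  intro s g hg
  -- The coefficients of the indices `(i, j)` vanish; that of `1` is treated at the end.
  have hsome : ∀ q, some q ∈ s → g (some q) = 0 := by
    rintro q₀ hq₀
    set c : ℕ → ℤ := fun n => ∑ x ∈ s, g x * (if n ∈ digitSet x then 1 else 0) with hc
    set C : ℕ := ∑ x ∈ s, (g x).natAbs with hCdef
    have hC : ∀ n, |c n| ≤ C := by
      intro n
      rw [hc, hCdef]
      push_cast
      refine (Finset.abs_sum_le_sum_abs _ _).trans (Finset.sum_le_sum fun x _ => ?_)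
      split_ifs <;> simp
    have h0 : ∑' n, (c n : ℝ) / (b : ℝ) ^ n = 0 := by
      have h1 := hasSum_sum fun x (_ : x ∈ s) => (hasSum_digitSet b hb x).mul_left (g x : ℝ)
      simp only [← zsmul_eq_mul (_ : ℝ) (_ : ℤ)] at h1
      rw [hg] at h1
      rw [← h1.tsum_eq]
      refine tsum_congr fun n => ?_
      rw [hc]
      push_cast
      rw [Finset.sum_div]
      exact Finset.sum_congr rfl fun x _ => by split_ifs <;> simp [div_eq_mul_inv]
    set B : ℕ := ∑ x ∈ s, x.elim 0 (fun q => q.1.1) with hB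
    have hBle : ∀ q, some q ∈ s → q.1.1 ≤ B := fun q hq =>
      Finset.single_le_sum (f := fun x : Option {p : ℕ × ℕ // 1 ≤ p.1 ∧ 2 ≤ p.2} =>
        x.elim 0 (fun q => q.1.1)) (fun _ _ => Nat.zero_le _) hq
    obtain ⟨⟨i₀, j₀⟩, hi₀, hj₀⟩ := q₀
    have hi₀B := hBle _ hq₀
    simp only at hi₀ hj₀ hi₀B
    obtain ⟨Q, hQ, a, haQ, hax⟩ := exists_isolating_class i₀ j₀ hi₀ hj₀ B
      ((Finset.Icc (-(2 * C : ℤ)) (2 * C)).erase 0) (fun h hh => Finset.ne_of_mem_erase hh)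
    obtain ⟨p, hpgt, hp, hpa⟩ :=
      Nat.forall_exists_prime_gt_and_zmodEq (B + 2 * C + 1) hQ.ne' haQ
    have hiso := hax p hpa
    set n : ℕ := i₀ * p ^ j₀ with hn
    have hnp : p ≤ n := by
      calc p = 1 * p ^ 1 := by simp
        _ ≤ i₀ * p ^ j₀ := Nat.mul_le_mul hi₀ (Nat.pow_le_pow_right hp.pos (by omega))
    have hvan : ∀ m : ℕ, m ≠ n → n ≤ m + 2 * C → m ≤ n + 2 * C → c m = 0 := by
      intro m hmn h1 h2
      refine Finset.sum_eq_zero fun x hx => ?_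
      rw [if_neg, mul_zero]
      intro hm
      cases x with
      | none =>
        have : m = 0 := hm
        omega
      | some q =>
        obtain ⟨⟨r, hr⟩, hrm⟩ := hm
        have hq := q.2
        have hqB := hBle q hx
        simp only at hrm
        obtain ⟨l, hl, hlB, hd, hnd⟩ := hiso ((m : ℤ) - n) (by
          rw [Finset.mem_erase, Finset.mem_Icc]; omega)
        have hval : (i₀ : ℤ) * (p : ℤ) ^ j₀ + ((m : ℤ) - n) = (m : ℕ) := by
          rw [hn]; push_cast; ring
        rw [hval] at hd hnd
        have hd : l ∣ m := by exact_mod_cast hd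
        have hnd : ¬ l ^ 2 ∣ m := by exact_mod_cast hnd
        rw [← hrm] at hd hnd
        rcases hl.dvd_mul.mp hd with h3 | h3
        · have := Nat.le_of_dvd hq.1 h3
          omega
        · have h4 := hl.dvd_of_dvd_pow h3
          exact hnd (Dvd.dvd.mul_left ((pow_dvd_pow_of_dvd h4 2).trans (pow_dvd_pow r hq.2)) _)
    have hcn : c n = g (some ⟨(i₀, j₀), hi₀, hj₀⟩) := by
      simp only [hc]
      rw [Finset.sum_eq_single_of_mem _ hq₀]
      · rw [if_pos, mul_one]
        exact ⟨⟨p, hp⟩, rfl⟩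
      · intro x hx hne
        rw [if_neg, mul_zero]
        intro hm
        cases x with
        | none =>
          have : n = 0 := hm
          omega
        | some q =>
          obtain ⟨⟨r, hr⟩, hrm⟩ := hm
          obtain ⟨⟨i, j⟩, hi, hj⟩ := q
          have hqB := hBle _ hx
          simp only at hrm hi hqB
          obtain ⟨rfl, rfl⟩ := eq_of_mul_pow_eq hp hr hi hi₀ (by omega) (by omega) (by omega) hrm
          exact hne rfl
    rw [← hcn]
    exact digit_eq_zero_of_isolated b hb c C hC h0 n
      (fun k hk => hvan _ (by omega) (by omega) (by omega)) (n - 2 * C) (by omega)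
      (fun k hk => hvan _ (by omega) (by omega) (by omega))
  intro x hx
  cases x with
  | some q => exact hsome q hx
  | none =>
    rw [Finset.sum_eq_single_of_mem _ hx] at hg
    · simpa using hg
    · intro y hy hne
      cases y with
      | none => exact absurd rfl hne
      | some q => rw [hsome q hy, zero_smul]
end

section
/- Let b ≥ 2 be an integer. Then the set consisting of the number 1 together with all the numbers Σ_{n squarefree} 1/b^{i·n^j}, for integers i ≥ 1 and j ≥ 2 (the sum taken over all squarefree positive integers n), is linearly independent over ℚ. -/
/-!
Suppose an integer relation `c + ∑ g(i,j) ∑ₙ b^(-i n^j) = 0` holds, with `(i,j)` in a finite set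
`F`. It reads `c + ∑ₘ a(m) b^(-m) = 0`, where `a(m)` is the sum of `g(i,j)` over those `(i,j)` for
which `m = i n^j` with `n` squarefree. The digits `a(m)` are bounded integers, so the scaled
tails `∑ₖ a(N+k) b^(-k)` are bounded integers, and such a tail vanishes as soon as its first `L`
digits do, for a fixed large `L`. Hence a digit surrounded by `L` zeros on both sides is itself
zero (`digit_eq_zero_of_isolated`).

It remains to exhibit an isolated position with a nonzero digit. Among the `(i,j)` with
`g(i,j) ≠ 0` take `(i₀,j₀)` with `i₀` minimal, and look at the position `i₀ P^j₀` with `P` a large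
prime. There the digit is exactly `g(i₀,j₀)`: if `i n^j = i₀ P^j₀`, comparing the powers of `P`
gives `j = j₀` and then `i ≤ i₀` (`eq_of_mul_prime_pow_eq`). To make the neighbours
`i₀ P^j₀ + h`, `0 < |h| ≤ L`, have digit zero, force each of them to be divisible by a high power
of a prime not dividing any of the `i`; no `i n^j` with `n` squarefree is
(`not_prime_pow_dvd`). This is a congruence condition on `P`, solvable with a residue coprime to
the modulus (`exists_residue_class`: a Euclid-type argument, Hensel lifting and the Chinese
remainder theorem), so Dirichlet's theorem on primes in arithmetic progressions supplies `P`.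
-/

/-! ### High prime powers dividing the neighbours of `c * n ^ j` -/

/-- Hensel lifting for `c * X ^ j + h`: a root `x` modulo `p` at which the derivative does not
vanish lifts to a root modulo every power of `p`. -/
lemma exists_hensel_lift {p : ℕ} (hp : p.Prime) {c h x : ℤ} {j : ℕ}
    (hd : ¬ (p : ℤ) ∣ c * j * x) (hx : (p : ℤ) ∣ c * x ^ j + h) (k : ℕ) :
    ∃ y : ℤ, (p : ℤ) ∣ y - x ∧ (p : ℤ) ^ (k + 1) ∣ c * y ^ j + h := by
  have hpZ : Prime (p : ℤ) := Nat.prime_iff_prime_int.mp hp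
  induction k with
  | zero => exact ⟨x, by simp, by simpa using hx⟩
  | succ k ih =>
    obtain ⟨y, hyx, u, hu⟩ := ih
    have hy : ¬ (p : ℤ) ∣ c * j * y ^ (j - 1) := by
      intro hdvd
      rcases hpZ.dvd_or_dvd hdvd with h1 | h1
      · exact hd (h1.mul_right _)
      · have h2 : (p : ℤ) ∣ x := by
          have := dvd_sub (hpZ.dvd_of_dvd_pow h1) hyx
          simpa using this
        exact hd (h2.mul_left _)
    -- Newton step: `t` inverts the derivative `c * j * y ^ (j - 1)` modulo `p`.
    obtain ⟨s, t, hst⟩ := ((Prime.coprime_iff_not_dvd hpZ).mpr hy)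
    obtain ⟨w, hw⟩ := Polynomial.powAddExpansion y ((p : ℤ) ^ (k + 1) * (-u * t)) j
    refine ⟨y + (p : ℤ) ^ (k + 1) * (-u * t), ?_, ?_⟩
    · have h1 : (p : ℤ) ∣ (p : ℤ) ^ (k + 1) * (-u * t) :=
        (dvd_pow_self _ (Nat.succ_ne_zero k)).mul_right _
      rw [add_sub_right_comm]
      exact dvd_add hyx h1
    · rw [hw]
      refine ⟨u * s + c * w * (p : ℤ) ^ k * (u * t) ^ 2, ?_⟩
      linear_combination hu - (p : ℤ) ^ (k + 1) * u * hst

/-- For `x = h * E` one has `c * x ^ j + h = h * (P + 1)`, where `P = c * h ^ (j - 1) * E ^ j` is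
divisible by `h` and by `E`. A prime factor of `P + 1` is therefore coprime to `h` and to `E`, and
Hensel lifting applies at this prime. -/
lemma exists_prime_pow_dvd {c j : ℕ} (hc : 0 < c) (hj : 2 ≤ j) {h : ℤ} (hh : h ≠ 0)
    {D : ℕ} (hD : 0 < D) (K : ℕ) :
    ∃ p : ℕ, p.Prime ∧ p.Coprime D ∧ ∃ y : ℕ, p.Coprime y ∧
      (p : ℤ) ^ K ∣ (c : ℤ) * (y : ℤ) ^ j + h := by
  obtain ⟨l, rfl⟩ : ∃ l, j = l + 2 := ⟨j - 2, by omega⟩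
  -- The factor `3` makes `P + 1 ≡ 1 [ZMOD 3]`, which excludes `P + 1 = -1`.
  set E : ℤ := 3 * D * c * (l + 2 : ℕ) with hE
  have hE0 : E ≠ 0 := by positivity
  set P : ℤ := c * h ^ (l + 1) * E ^ (l + 2) with hP
  have hP0 : P ≠ 0 := by
    have : (c : ℤ) ≠ 0 := by positivity
    positivity
  have hEP : E ∣ P := (dvd_pow_self E (by omega)).mul_left _
  have h3 : (3 : ℤ) ∣ P := Dvd.dvd.trans ⟨D * c * (l + 2 : ℕ), by rw [hE]; ring⟩ hEP
  have hhP : h ∣ P := ((dvd_pow_self h (by omega)).mul_left _).mul_right _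
  have hw1 : (P + 1).natAbs ≠ 1 := by omega
  set p := (P + 1).natAbs.minFac with hpdef
  have hp : p.Prime := Nat.minFac_prime hw1
  have hpZ : Prime (p : ℤ) := Nat.prime_iff_prime_int.mp hp
  have hpw : (p : ℤ) ∣ P + 1 := Int.natCast_dvd.mpr (Nat.minFac_dvd _)
  have hpP : ¬ (p : ℤ) ∣ P := fun hd => hpZ.not_isUnit
    (isUnit_of_dvd_one ((dvd_add_right hd).mp hpw))
  have hpE : ¬ (p : ℤ) ∣ E := fun hd => hpP (hd.trans hEP)
  have hph : ¬ (p : ℤ) ∣ h := fun hd => hpP (hd.trans hhP)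
  have hpx : ¬ (p : ℤ) ∣ h * E := fun hd => (hpZ.dvd_or_dvd hd).elim hph hpE
  obtain ⟨y, hyx, hy⟩ := exists_hensel_lift hp (c := c) (h := h) (x := h * E) (j := l + 2)
    (by
      intro hd
      rcases hpZ.dvd_or_dvd hd with h1 | h1
      · exact hpE (h1.trans ⟨3 * D, by rw [hE]; ring⟩)
      · exact hpx h1)
    (by
      have : (c : ℤ) * (h * E) ^ (l + 2) + h = h * (P + 1) := by rw [hP]; ring
      rw [this]; exact hpw.mul_left _) K
  have hq : (0 : ℤ) < (p : ℤ) ^ (K + 1) := by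
    have := hp.pos
    positivity
  obtain ⟨n, hn⟩ := Int.eq_ofNat_of_zero_le (Int.emod_nonneg y hq.ne')
  have hny : (p : ℤ) ^ (K + 1) ∣ (n : ℤ) - y := by
    rw [← Int.ofNat_eq_natCast, ← hn]
    exact (Int.mod_modEq y _).symm.dvd
  refine ⟨p, hp, ?_, n, ?_, ?_⟩
  · rw [hp.coprime_iff_not_dvd]
    intro hd
    exact hpE ((Int.natCast_dvd_natCast.mpr hd).trans ⟨3 * c * (l + 2 : ℕ), by rw [hE]; ring⟩)
  · rw [hp.coprime_iff_not_dvd]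
    intro hd
    have h1 : (p : ℤ) ∣ (n : ℤ) - y := (dvd_pow_self _ (Nat.succ_ne_zero K)).trans hny
    have h2 := dvd_sub (Int.natCast_dvd_natCast.mpr hd) (dvd_add h1 hyx)
    rw [sub_add_sub_cancel, sub_sub_cancel] at h2
    exact hpx h2
  · have h1 : (p : ℤ) ^ (K + 1) ∣ (c : ℤ) * (n : ℤ) ^ (l + 2) + h := by
      have h2 := (hny.trans (sub_dvd_pow_sub_pow (n : ℤ) y (l + 2))).mul_left (c : ℤ)
      have e : (c : ℤ) * (n : ℤ) ^ (l + 2) + h =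
          c * ((n : ℤ) ^ (l + 2) - y ^ (l + 2)) + (c * y ^ (l + 2) + h) := by ring
      rw [e]
      exact dvd_add h2 hy
    exact (pow_dvd_pow _ (Nat.le_succ K)).trans h1

/-- A residue class, coprime to its modulus, on which every shift `c * n ^ j + h` with `h ∈ S` is
divisible by the `K`-th power of a prime coprime to `D`. -/
lemma exists_residue_class {c j : ℕ} (hc : 0 < c) (hj : 2 ≤ j) {D : ℕ} (hD : 0 < D) (K : ℕ)
    (S : Finset ℤ) (hS : (0 : ℤ) ∉ S) :
    ∃ M r : ℕ, 0 < M ∧ r.Coprime M ∧ ∀ n : ℕ, n ≡ r [MOD M] → ∀ h ∈ S,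
      ∃ p : ℕ, p.Prime ∧ p.Coprime D ∧ (p : ℤ) ^ K ∣ (c : ℤ) * (n : ℤ) ^ j + h := by
  induction S using Finset.induction_on with
  | empty => exact ⟨1, 1, one_pos, by simp, by simp⟩
  | insert h S hhS ih =>
    simp only [Finset.mem_insert, not_or] at hS
    obtain ⟨M, r, hM, hr, H⟩ := ih hS.2
    -- Coprimality to `M` as well keeps the new modulus `p ^ K` coprime to the previous ones.
    obtain ⟨p, hp, hpD, y, hpy, hy⟩ :=
      exists_prime_pow_dvd hc hj (Ne.symm hS.1) (Nat.mul_pos hD hM) K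
    have hpM : M.Coprime (p ^ K) := (hpD.coprime_mul_left_right.pow_left K).symm
    obtain ⟨z, hz1, hz2⟩ := Nat.chineseRemainder hpM r y
    refine ⟨M * p ^ K, z, Nat.mul_pos hM (pow_pos hp.pos K), ?_, ?_⟩
    · refine Nat.Coprime.mul_right ?_ ?_
      · rw [Nat.Coprime, hz1.gcd_eq]; exact hr
      · rw [Nat.Coprime, hz2.gcd_eq]; exact (hpy.pow_left K).symm
    · intro n hn g hg
      rcases Finset.mem_insert.mp hg with rfl | hg
      · refine ⟨p, hp, hpD.coprime_mul_right_right, ?_⟩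
        have h1 : (n : ℤ) ≡ y [ZMOD (p ^ K : ℕ)] :=
          Int.natCast_modEq_iff.mpr ((hn.of_mul_left M).trans hz2)
        have h2 := ((h1.pow j).mul_left (c : ℤ)).add_right g
        push_cast at h2
        exact h2.dvd_iff.mpr hy
      · exact H n ((hn.of_mul_right _).trans hz1) g hg

/-! ### Arithmetic of the numbers `i * n ^ j` with `n` squarefree -/

lemma not_prime_pow_dvd {p i n j K : ℕ} (hp : p.Prime) (hpi : p.Coprime i)
    (hn : Squarefree n) (hjK : j < K) : ¬ p ^ K ∣ i * n ^ j := by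
  intro hd
  have h1 : p ^ (j + 1) ∣ n ^ j :=
    (pow_dvd_pow p hjK).trans ((hpi.pow_left K).dvd_of_dvd_mul_left hd)
  have hpn : p ∣ n := hp.dvd_of_dvd_pow ((dvd_pow_self p (Nat.succ_ne_zero j)).trans h1)
  obtain ⟨m, rfl⟩ := hpn
  rw [mul_pow, pow_succ] at h1
  have h2 := hp.dvd_of_dvd_pow (Nat.dvd_of_mul_dvd_mul_left (pow_pos hp.pos j) h1)
  exact hp.not_isUnit (hn p (mul_dvd_mul_left p h2))

/-- The `p`-adic valuation determines the exponent `j₀`; then `i₀ = i * (n / p) ^ j₀`, so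
`i ≤ i₀`. -/
lemma eq_of_mul_prime_pow_eq {p i i₀ n j j₀ : ℕ} (hp : p.Prime) (hi₀ : 0 < i₀)
    (hpi : p.Coprime i) (hpi₀ : p.Coprime i₀) (hj₀ : j₀ ≠ 0)
    (hn : Squarefree n) (h : i * n ^ j = i₀ * p ^ j₀) : j = j₀ ∧ i ≤ i₀ := by
  have hpn : p ∣ n := by
    have : p ∣ i * n ^ j := h ▸ (dvd_pow_self p hj₀).mul_left _
    exact hp.dvd_of_dvd_pow (hpi.dvd_of_dvd_mul_left this)
  have h1 : j₀ ≤ j := by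
    by_contra hlt
    exact not_prime_pow_dvd hp hpi hn (not_le.mp hlt) (h ▸ dvd_mul_left _ _)
  have h2 : j ≤ j₀ := by
    by_contra hlt
    refine not_prime_pow_dvd hp hpi₀ hp.prime.squarefree (not_le.mp hlt) (h ▸ ?_)
    exact (pow_dvd_pow_of_dvd hpn j).mul_left _
  have hjj : j = j₀ := le_antisymm h2 h1
  subst hjj
  refine ⟨rfl, ?_⟩
  obtain ⟨m, rfl⟩ := hpn
  have h3 : i * m ^ j = i₀ := by
    have : (i * m ^ j) * p ^ j = i₀ * p ^ j := by rw [← h]; ring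
    exact Nat.eq_of_mul_eq_mul_right (pow_pos hp.pos j) this
  exact Nat.le_of_dvd hi₀ ⟨_, h3.symm⟩

/-! ### Isolated digits -/

/-- If an integer `-c` is expanded in base `b` with integer digits bounded by `A`, then a digit
having `L` zero digits on either side is zero, provided `2 * A < b ^ L`. -/
lemma digit_eq_zero_of_isolated_s4 {b : ℕ} (hb : 2 ≤ b) {a : ℕ → ℤ} {A c : ℤ}
    (hA : ∀ m, |a m| ≤ A) (hsum : (c : ℝ) + ∑' m, (a m : ℝ) / (b : ℝ) ^ m = 0)
    {L m₀ : ℕ} (hL : 2 * A < (b : ℤ) ^ L) (hm₀ : L ≤ m₀)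
    (hiso : ∀ m, m ≠ m₀ → m₀ ≤ m + L → m ≤ m₀ + L → a m = 0) : a m₀ = 0 := by
  have hb0 : (0 : ℝ) < b := by positivity
  have hb2 : (2 : ℝ) ≤ b := by exact_mod_cast hb
  have hA' : ∀ m, |(a m : ℝ)| ≤ A := fun m => by exact_mod_cast hA m
  have hbound : ∀ N k, ‖(a (N + k) : ℝ) / (b : ℝ) ^ k‖ ≤ (A : ℝ) * (1 / 2) ^ k := by
    intro N k
    rw [Real.norm_eq_abs, abs_div, abs_of_pos (pow_pos hb0 k), div_eq_mul_inv, one_div, inv_pow]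
    have := hA' (N + k)
    gcongr
    exact (abs_nonneg _).trans this
  have hgeo : HasSum (fun k : ℕ => (A : ℝ) * (1 / 2) ^ k) ((A : ℝ) * 2) :=
    hasSum_geometric_two.mul_left _
  have hsummable : ∀ N, Summable fun k => (a (N + k) : ℝ) / (b : ℝ) ^ k := fun N =>
    Summable.of_norm_bounded hgeo.summable (hbound N)
  -- The scaled tails `R N` satisfy `R (N + 1) = b * (R N - a N)` and `R 0 = -c`, hence are
  -- integers.
  set R : ℕ → ℝ := fun N => ∑' k, (a (N + k) : ℝ) / (b : ℝ) ^ k with hR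
  have hRb : ∀ N, |R N| ≤ A * 2 := fun N => tsum_of_norm_bounded hgeo (hbound N)
  have hRrec : ∀ N, R (N + 1) = b * (R N - a N) := by
    intro N
    have h1 : R N = a N + ∑' k, (a (N + (k + 1)) : ℝ) / (b : ℝ) ^ (k + 1) := by
      simpa using (hsummable N).tsum_eq_zero_add
    have h2 : ∑' k, (a (N + (k + 1)) : ℝ) / (b : ℝ) ^ (k + 1) = R (N + 1) / b := by
      rw [hR, ← tsum_div_const]
      refine tsum_congr fun k => ?_
      rw [pow_succ, div_div, show N + (k + 1) = N + 1 + k by ring]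
    rw [h1, h2]
    field_simp
    ring
  have hint : ∀ N, ∃ z : ℤ, R N = z := by
    intro N
    induction N with
    | zero =>
      refine ⟨-c, ?_⟩
      simp only [hR, zero_add]
      push_cast
      linarith
    | succ N ih =>
      obtain ⟨z, hz⟩ := ih
      exact ⟨b * (z - a N), by rw [hRrec, hz]; push_cast; ring⟩
  choose z hz using hint
  have hzrec : ∀ N, z (N + 1) = b * (z N - a N) := fun N => by
    have := hRrec N
    rw [hz, hz] at this
    exact_mod_cast this
  have hzb : ∀ N, |z N| ≤ A * 2 := fun N => by
    have := hRb N
    rw [hz] at this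
    exact_mod_cast this
  have hpow : ∀ N l, (∀ k < l, a (N + k) = 0) → z (N + l) = (b : ℤ) ^ l * z N := by
    intro N l
    induction l with
    | zero => simp
    | succ l ih =>
      intro hk
      rw [← add_assoc, hzrec, ih fun k hkl => hk k (by omega), hk l (by omega)]
      ring
  -- A tail beginning with `L` zeros is multiplied by `b ^ L > 2 * A` after `L` steps, whereas all
  -- tails are at most `2 * A` in absolute value.
  have hgap : ∀ N, (∀ k < L, a (N + k) = 0) → z N = 0 := by
    intro N hN
    by_contra hne
    have h1 := hzb (N + L)
    rw [hpow N L hN, abs_mul, abs_of_nonneg (by positivity : (0 : ℤ) ≤ (b : ℤ) ^ L)] at h1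
    have h2 : 1 ≤ |z N| := Int.one_le_abs hne
    nlinarith [pow_nonneg (by positivity : (0 : ℤ) ≤ (b : ℤ)) L]
  have hz1 : z (m₀ + 1) = 0 := hgap _ fun k hk => hiso _ (by omega) (by omega) (by omega)
  have hleft : ∀ k < L, a (m₀ - L + k) = 0 :=
    fun k hk => hiso _ (by omega) (by omega) (by omega)
  have hz0 : z m₀ = 0 := by
    have := hpow (m₀ - L) L hleft
    rwa [hgap _ hleft, mul_zero, Nat.sub_add_cancel hm₀] at this
  have := hzrec m₀
  rw [hz1, hz0] at this
  have hbz : (b : ℤ) ≠ 0 := by positivity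
  have := (mul_eq_zero.mp this.symm).resolve_left hbz
  omega

/-! ### The digit sequences of the series -/

open Classical in
/-- The indicator function of the set of values `i * n ^ j`, `n` squarefree, evaluated at `m`.
Positivity of `n` is automatic, since `0` is not squarefree in `ℕ`. -/
noncomputable def sfDigit (i j m : ℕ) : ℤ :=
  if ∃ n : ℕ, Squarefree n ∧ i * n ^ j = m then 1 else 0

lemma abs_sfDigit_le (i j m : ℕ) : |sfDigit i j m| ≤ 1 := by
  unfold sfDigit; split_ifs <;> simp

lemma summable_sfDigit {b : ℕ} (hb : 2 ≤ b) (i j : ℕ) :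
    Summable fun m : ℕ => (sfDigit i j m : ℝ) / (b : ℝ) ^ m := by
  have hb2 : (2 : ℝ) ≤ b := by exact_mod_cast hb
  refine Summable.of_norm_bounded summable_geometric_two fun m => ?_
  have h1 : |(sfDigit i j m : ℝ)| ≤ 1 := by exact_mod_cast abs_sfDigit_le i j m
  rw [Real.norm_eq_abs, abs_div, abs_of_pos (by positivity : (0 : ℝ) < (b : ℝ) ^ m), one_div,
    inv_pow, ← one_div]
  gcongr

lemma tsum_squarefree_eq (b : ℕ) {i j : ℕ} (hi : 0 < i) (hj : j ≠ 0) :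
    ∑' n : {n : ℕ // 0 < n ∧ Squarefree n}, 1 / (b : ℝ) ^ (i * (n : ℕ) ^ j) =
      ∑' m : ℕ, (sfDigit i j m : ℝ) / (b : ℝ) ^ m := by
  have hinj : Function.Injective
      fun n : {n : ℕ // 0 < n ∧ Squarefree n} => i * (n : ℕ) ^ j := fun n n' h =>
    Subtype.ext (Nat.pow_left_injective hj (Nat.eq_of_mul_eq_mul_left hi h))
  rw [← hinj.tsum_eq]
  · refine tsum_congr fun n => ?_
    rw [sfDigit, if_pos ⟨n, n.2.2, rfl⟩, Int.cast_one]
  · intro m hm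
    by_contra hne
    refine hm ?_
    have : ¬ ∃ n : ℕ, Squarefree n ∧ i * n ^ j = m := fun ⟨n, hn, h⟩ =>
      hne ⟨⟨n, Nat.pos_of_ne_zero hn.ne_zero, hn⟩, h⟩
    simp [sfDigit, this]

/-- An integer relation between `1` and finitely many of the series, written through their digits,
has zero coefficients at the series. -/
lemma coeff_eq_zero {b : ℕ} (hb : 2 ≤ b) (F : Finset {p : ℕ × ℕ // 1 ≤ p.1 ∧ 2 ≤ p.2})
    (g : {p : ℕ × ℕ // 1 ≤ p.1 ∧ 2 ≤ p.2} → ℤ) (c : ℤ)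
    (hsum : (c : ℝ) + ∑ q ∈ F, (g q : ℝ) *
      ∑' m : ℕ, (sfDigit q.1.1 q.1.2 m : ℝ) / (b : ℝ) ^ m = 0) :
    ∀ q ∈ F, g q = 0 := by
  by_contra! hne
  obtain ⟨q₁, hq₁, hgq₁⟩ := hne
  obtain ⟨q₀, hq₀, hmin⟩ := Finset.exists_min_image (F.filter fun q => g q ≠ 0)
    (fun q => q.1.1) ⟨q₁, Finset.mem_filter.mpr ⟨hq₁, hgq₁⟩⟩
  obtain ⟨hq₀F, hgq₀⟩ := Finset.mem_filter.mp hq₀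
  set a : ℕ → ℤ := fun m => ∑ q ∈ F, g q * sfDigit q.1.1 q.1.2 m with ha
  have hA : ∀ m, |a m| ≤ ∑ q ∈ F, |g q| := fun m => by
    refine (Finset.abs_sum_le_sum_abs _ _).trans (Finset.sum_le_sum fun q _ => ?_)
    rw [abs_mul]
    exact mul_le_of_le_one_right (abs_nonneg _) (abs_sfDigit_le _ _ _)
  have hsum' : (c : ℝ) + ∑' m, (a m : ℝ) / (b : ℝ) ^ m = 0 := by
    rw [← hsum]
    congr 1
    simp_rw [← tsum_mul_left]
    rw [← Summable.tsum_finsetSum fun q _ => (summable_sfDigit hb _ _).mul_left _]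
    refine tsum_congr fun m => ?_
    simp only [ha]
    push_cast
    rw [Finset.sum_div]
    exact Finset.sum_congr rfl fun q _ => mul_div_assoc _ _ _
  obtain ⟨L, hL⟩ := pow_unbounded_of_one_lt (2 * ∑ q ∈ F, |g q|)
    (by exact_mod_cast hb : (1 : ℤ) < (b : ℤ))
  set D : ℕ := ∏ q ∈ F, q.1.1 with hD
  have hD0 : 0 < D := Finset.prod_pos fun q _ => q.2.1
  set K : ℕ := ∑ q ∈ F, q.1.2 + 1 with hK
  have hjK : ∀ q ∈ F, q.1.2 < K := fun q hq =>
    Nat.lt_succ_of_le (Finset.single_le_sum (f := fun q => q.1.2) (fun _ _ => Nat.zero_le _) hq)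
  have hiD : ∀ q ∈ F, q.1.1 ∣ D := fun q hq => Finset.dvd_prod_of_mem (fun q => q.1.1) hq
  obtain ⟨M, r, hM, hr, H⟩ := exists_residue_class (c := q₀.1.1) q₀.2.1 q₀.2.2 hD0 K
    ((Finset.Icc (-L : ℤ) L).erase 0) (by simp)
  obtain ⟨P, hPgt, hP, hPr⟩ := Nat.forall_exists_prime_gt_and_modEq (L + D) hM.ne' hr
  have hPi : ∀ q ∈ F, P.Coprime q.1.1 := fun q hq =>
    hP.coprime_iff_not_dvd.mpr fun hd => by
      have h1 := Nat.le_of_dvd hD0 (hd.trans (hiD q hq))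
      omega
  have hPm : P ≤ q₀.1.1 * P ^ q₀.1.2 :=
    (Nat.le_self_pow (by have := q₀.2.2; omega) P).trans (Nat.le_mul_of_pos_left _ q₀.2.1)
  -- A neighbour `q.1.1 * n ^ q.1.2` at distance at most `L` would be divisible by `p ^ K` with
  -- `p` coprime to `q.1.1` and `K > q.1.2`.
  have hzero : a (q₀.1.1 * P ^ q₀.1.2) = 0 := by
    refine digit_eq_zero_of_isolated_s4 hb hA hsum' hL (by omega) fun m hm hm1 hm2 => ?_
    refine Finset.sum_eq_zero fun q hq => mul_eq_zero_of_right _ (if_neg ?_)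
    rintro ⟨n, hn, rfl⟩
    obtain ⟨p, hp, hpD, hdvd⟩ := H P hPr
      ((q.1.1 * n ^ q.1.2 : ℕ) - (q₀.1.1 * P ^ q₀.1.2 : ℕ) : ℤ)
      (Finset.mem_erase.mpr ⟨by omega, Finset.mem_Icc.mpr ⟨by omega, by omega⟩⟩)
    refine not_prime_pow_dvd hp (hpD.coprime_dvd_right (hiD q hq)) hn (hjK q hq) ?_
    have e : ((q₀.1.1 : ℤ) * (P : ℤ) ^ q₀.1.2 +
        ((q.1.1 * n ^ q.1.2 : ℕ) - (q₀.1.1 * P ^ q₀.1.2 : ℕ))) =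
        ((q.1.1 * n ^ q.1.2 : ℕ) : ℤ) := by push_cast; ring
    rw [e] at hdvd
    exact_mod_cast hdvd
  -- Minimality of `q₀.1.1` leaves a single contribution to the digit at `q₀.1.1 * P ^ q₀.1.2`.
  have hval : a (q₀.1.1 * P ^ q₀.1.2) = g q₀ := by
    simp only [ha]
    rw [Finset.sum_eq_single_of_mem q₀ hq₀F]
    · rw [sfDigit, if_pos ⟨P, hP.prime.squarefree, rfl⟩, mul_one]
    · intro q hq hqq
      by_cases hgq : g q = 0
      · rw [hgq, zero_mul]
      · refine mul_eq_zero_of_right _ (if_neg ?_)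
        rintro ⟨n, hn, h⟩
        obtain ⟨hj, hi⟩ := eq_of_mul_prime_pow_eq hP q₀.2.1 (hPi q hq) (hPi q₀ hq₀F)
          (by have := q₀.2.2; omega) hn h
        have hi' := hmin q (Finset.mem_filter.mpr ⟨hq, hgq⟩)
        exact hqq (Subtype.ext (Prod.ext (le_antisymm hi hi') hj))
  exact hgq₀ (hval.symm.trans hzero)

theorem corollary3_squarefree (b : ℕ) (hb : 2 ≤ b) :
    LinearIndependent ℚ (fun x : Option {p : ℕ × ℕ // 1 ≤ p.1 ∧ 2 ≤ p.2} =>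
      x.elim (1 : ℝ) fun q =>
        ∑' n : {n : ℕ // 0 < n ∧ Squarefree n},
          1 / (b : ℝ) ^ (q.1.1 * (n : ℕ) ^ q.1.2)) := by
  classical
  rw [← LinearIndependent.iff_fractionRing ℤ ℚ, linearIndependent_iff'']
  intro s g hgs hsum
  -- Adding the index `none` to `s` is harmless, and splits off the coefficient of `1`.
  have hsum' : ∑ x ∈ Finset.insertNone (Finset.eraseNone s), g x •
      (x.elim (1 : ℝ) fun q => ∑' n : {n : ℕ // 0 < n ∧ Squarefree n},
          1 / (b : ℝ) ^ (q.1.1 * (n : ℕ) ^ q.1.2)) = 0 := by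
    rw [← hsum, Finset.insertNone_eraseNone]
    symm
    refine Finset.sum_subset (Finset.subset_insert _ _) fun x _ hx => ?_
    rw [hgs x hx, zero_smul]
  rw [Finset.sum_insertNone] at hsum'
  simp only [Option.elim_none, Option.elim_some, zsmul_eq_mul, mul_one] at hsum'
  have hsome : ∀ q ∈ Finset.eraseNone s, g (some q) = 0 := by
    refine coeff_eq_zero hb _ (fun q => g (some q)) (g none) ?_
    rw [← hsum']
    congr 1
    refine Finset.sum_congr rfl fun q _ => ?_
    rw [tsum_squarefree_eq b q.2.1 (by have := q.2.2; omega)]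
  rw [Finset.sum_eq_zero fun q hq => by rw [hsome q hq, Int.cast_zero, zero_mul], add_zero]
    at hsum'
  rintro (_ | q)
  · exact_mod_cast hsum'
  · by_cases hq : some q ∈ s
    · exact hsome q (Finset.mem_eraseNone.mpr hq)
    · exact hgs _ hq
end
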